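/- For every odd n = 2k−1, every integer p ≥ 2, and every choice of parameters ℓ₁,…,ℓ_k each coprime to p, the lens space satisfies cat(L^n_p(ℓ₁,…,ℓ_k)) = n. -/

import Mathlib

open scoped Topology

/-- The Lusternik–Schnirelmann category of a space (normalized so that contractible spaces
have category 0): the least `k` such that `X` admits an open cover by `k+1` sets, each of
which has nullhomotopic inclusion into `X` (i.e. is contractible in `X`). -/
noncomputable def lsCat (X : Type*) [TopologicalSpace X] : ℕ :=
  sInf {k : ℕ | ∃ U : Fin (k + 1) → Set X,
    (∀ i, IsOpen (U i)) ∧ (⋃ i, U i) = Set.univ ∧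
    ∀ i, ContinuousMap.Nullhomotopic
      (⟨Subtype.val, continuous_subtype_val⟩ : C(U i, X))}

/-- The orbit relation on the unit sphere of `ℂ^k` defining the lens space
`L^{2k-1}_p(ℓ₁,…,ℓ_k)`: a fixed generator of `ℤ/p` acts coordinatewise by
`z_j ↦ exp(2πiℓ_j/p) z_j`, and `m` ranges over the powers of this generator. -/
def lensRel (p k : ℕ) (ℓ : Fin k → ℤ) :
    Metric.sphere (0 : EuclideanSpace ℂ (Fin k)) 1 →
      Metric.sphere (0 : EuclideanSpace ℂ (Fin k)) 1 → Prop :=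
  fun x y => ∃ m : ℤ, ∀ j : Fin k,
    (y.1 j) = Complex.exp (2 * Real.pi * Complex.I * m * ℓ j / p) * (x.1 j)

/-- The lens space `L^{2k-1}_p(ℓ₁,…,ℓ_k)`: the orbit space of the free linear action of `ℤ/p`
on the unit sphere `S^{2k-1} ⊆ ℂ^k` determined by the parameters `ℓ`, with the quotient
topology. -/
noncomputable def LensSpace (p k : ℕ) (ℓ : Fin k → ℤ) : Type :=
  Quot (lensRel p k ℓ)

noncomputable instance (p k : ℕ) (ℓ : Fin k → ℤ) : TopologicalSpace (LensSpace p k ℓ) :=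
  inferInstanceAs (TopologicalSpace (Quot (lensRel p k ℓ)))

/-!
Let `E` be the unit sphere of `ℂ^k`, with the free isometric action of `ZMod p` whose orbit space is
the lens space.

*Upper bound.* The open subset of `E` where the `j`-th coordinate lies in a sector of opening angle
`2π / p` misses a point of `E` and embeds in the lens space, so its image is contractible there. For
each `j`, two sectors suffice to cover the points with nonzero `j`-th coordinate.

*Lower bound.* A nullhomotopy of the inclusion of `U` lifts to `E` and gives an equivariant, locally
constant label `E → ZMod p` over `U`. So a cover of the lens space by `m + 1` such sets gives
`m + 1` labels, one of which is constant on each simplex that is small enough. On the other hand,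
`E` carries a tower of fundamental chains of small simplices: the boundary of the chain
in dimension `d + 1` is the image of the chain in dimension `d` under the differential of the
periodic resolution of `ZMod p`. A Tucker-type argument shows that in a fundamental `n`-chain some
simplex is nonconstant for any `n` given labels: a cochain that detects the fundamental chain is
pulled up one dimension for each label, and stays zero on the simplices on which one of the labels
used so far is constant. For `n = 2k - 1` this forces `n ≤ m`.
-/

/-- Ordered simplicial chains on the full simplex with vertex set `X`: the free abelian group on
all finite lists of vertices. The empty list is allowed, so the chain complex is augmented. -/
abbrev OrderedChain (X : Type*) := FreeAbelianGroup (List X)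

namespace OrderedChain

open FreeAbelianGroup (of)

section Operators

variable {X Y Z A : Type*} [AddCommGroup A]

lemma hom_ext {F G : OrderedChain X →+ A} (h : ∀ l, F (of l) = G (of l)) (c : OrderedChain X) :
    F c = G c :=
  DFunLike.congr_fun (FreeAbelianGroup.lift_ext F G h) c

/-- The join with a vertex: it prepends `x` to every simplex. -/
noncomputable def cone (x : X) : OrderedChain X →+ OrderedChain X :=
  FreeAbelianGroup.map (List.cons x)

@[simp] lemma cone_of (x : X) (l : List X) : cone x (of l) = of (x :: l) :=
  FreeAbelianGroup.map_of_apply l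

/-- The pushforward of chains along a map of vertices. -/
noncomputable def map (f : X → Y) : OrderedChain X →+ OrderedChain Y :=
  FreeAbelianGroup.map (List.map f)

@[simp] lemma map_of (f : X → Y) (l : List X) : map f (of l) = of (l.map f) :=
  FreeAbelianGroup.map_of_apply l

lemma map_cone (f : X → Y) (x : X) (c : OrderedChain X) :
    map f (cone x c) = cone (f x) (map f c) :=
  hom_ext (F := (map f).comp (cone x)) (G := (cone (f x)).comp (map f)) (by simp) c

lemma map_map (f : X → Y) (g : Y → Z) (c : OrderedChain X) :
    map g (map f c) = map (g ∘ f) c :=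
  hom_ext (F := (map g).comp (map f)) (by simp) c

lemma map_id (c : OrderedChain X) : map id c = c :=
  hom_ext (G := AddMonoidHom.id _) (by simp) c

/-- The augmented boundary of a simplex. Recursion on the first vertex replaces the alternating
sum over all faces: the cone over `l` has boundary `l` minus the cone over the boundary of `l`. -/
noncomputable def simplexBoundary : List X → OrderedChain X
  | [] => 0
  | x :: l => of l - cone x (simplexBoundary l)

/-- The boundary operator of the augmented ordered chain complex. -/
noncomputable def boundary : OrderedChain X →+ OrderedChain X :=
  FreeAbelianGroup.lift simplexBoundary

@[simp] lemma boundary_of_nil : boundary (of ([] : List X)) = 0 := by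
  simp [boundary, simplexBoundary]

lemma boundary_of_cons (x : X) (l : List X) :
    boundary (of (x :: l)) = of l - cone x (boundary (of l)) := by
  simp [boundary, simplexBoundary]

lemma boundary_cone (x : X) (c : OrderedChain X) :
    boundary (cone x c) = c - cone x (boundary c) :=
  hom_ext (F := boundary.comp (cone x)) (G := .id _ - (cone x).comp boundary)
    (by simp [boundary_of_cons]) c

lemma boundary_boundary (c : OrderedChain X) : boundary (boundary c) = 0 := by
  refine hom_ext (F := boundary.comp boundary) (G := 0) (fun l => ?_) c
  induction l with
  | nil => simp
  | cons x l ih =>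
    rw [AddMonoidHom.comp_apply, AddMonoidHom.zero_apply] at ih ⊢
    rw [boundary_of_cons, map_sub, boundary_cone, ih, map_zero, sub_zero, sub_self]

lemma boundary_map (f : X → Y) (c : OrderedChain X) :
    boundary (map f c) = map f (boundary c) := by
  refine hom_ext (F := boundary.comp (map f)) (G := (map f).comp boundary) (fun l => ?_) c
  induction l with
  | nil => simp
  | cons x l ih =>
    simp only [AddMonoidHom.comp_apply, map_of] at ih ⊢
    rw [List.map_cons, boundary_of_cons, boundary_of_cons, ih, map_sub, map_of, map_cone]

/-- The prism between the images of a simplex under two maps of vertices. -/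
noncomputable def simplexPrism (f g : X → Y) : List X → OrderedChain Y
  | [] => 0
  | x :: l => of (f x :: g x :: l.map g) - cone (f x) (simplexPrism f g l)

/-- The prism operator, a chain homotopy between the maps of chains induced by `f` and `g`. -/
noncomputable def prism (f g : X → Y) : OrderedChain X →+ OrderedChain Y :=
  FreeAbelianGroup.lift (simplexPrism f g)

@[simp] lemma prism_of_nil (f g : X → Y) : prism f g (of []) = 0 := by
  simp [prism, simplexPrism]

lemma prism_of_cons (f g : X → Y) (x : X) (l : List X) :
    prism f g (of (x :: l)) = of (f x :: g x :: l.map g) - cone (f x) (prism f g (of l)) := by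
  simp [prism, simplexPrism]

lemma prism_cone (f g : X → Y) (x : X) (c : OrderedChain X) :
    prism f g (cone x c) = cone (f x) (cone (g x) (map g c)) - cone (f x) (prism f g c) :=
  hom_ext (F := (prism f g).comp (cone x))
    (G := (cone (f x)).comp ((cone (g x)).comp (map g)) - (cone (f x)).comp (prism f g))
    (by simp [prism_of_cons]) c

lemma boundary_prism (f g : X → Y) (c : OrderedChain X) :
    boundary (prism f g c) = map g c - map f c - prism f g (boundary c) := by
  refine hom_ext (F := boundary.comp (prism f g))
    (G := map g - map f - (prism f g).comp boundary) (fun l => ?_) c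
  induction l with
  | nil => simp
  | cons x l ih =>
    simp only [AddMonoidHom.comp_apply, AddMonoidHom.sub_apply] at ih ⊢
    rw [← cone_of]
    simp only [boundary_cone, prism_cone, map_cone, boundary_map, map_sub, ih]
    abel

lemma boundary_sum_prism (F : ℕ → X → Y) (N : ℕ) {c : OrderedChain X} (hc : boundary c = 0) :
    boundary (∑ s ∈ Finset.range N, prism (F s) (F (s + 1)) c) = map (F N) c - map (F 0) c := by
  simp only [map_sum, boundary_prism, hc, map_zero, sub_zero]
  exact Finset.sum_range_sub (fun s => map (F s) c) N

end Operators

section Support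

variable {X Y A : Type*} [AddCommGroup A] {T T' : Set (List X)}

/-- The group of chains all of whose simplices belong to `T`. -/
def supportedOn (T : Set (List X)) : AddSubgroup (OrderedChain X) :=
  AddSubgroup.closure (of '' T)

lemma of_mem_supportedOn {l : List X} (h : l ∈ T) : of l ∈ supportedOn T :=
  AddSubgroup.subset_closure ⟨l, h, rfl⟩

lemma supportedOn_mono (h : T ⊆ T') : supportedOn T ≤ supportedOn T' :=
  AddSubgroup.closure_mono (Set.image_mono h)

lemma map_mem_of_mem_supportedOn {B : AddSubgroup A} (F : OrderedChain X →+ A)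
    (h : ∀ l ∈ T, F (of l) ∈ B) {c : OrderedChain X} (hc : c ∈ supportedOn T) : F c ∈ B := by
  have : supportedOn T ≤ B.comap F :=
    (AddSubgroup.closure_le _).2 (Set.image_subset_iff.2 h)
  exact this hc

lemma eq_of_mem_supportedOn (F G : OrderedChain X →+ A)
    (h : ∀ l ∈ T, F (of l) = G (of l)) {c : OrderedChain X} (hc : c ∈ supportedOn T) :
    F c = G c := by
  have : supportedOn T ≤ F.eqLocus G :=
    (AddSubgroup.closure_le _).2 (Set.image_subset_iff.2 h)
  exact this hc

lemma boundary_of_mem_supportedOn_subset (l : List X) :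
    boundary (of l) ∈ supportedOn {m | m ⊆ l} := by
  induction l with
  | nil => simp
  | cons x l ih =>
    rw [boundary_of_cons]
    refine sub_mem (of_mem_supportedOn (List.subset_cons_self x l))
      (map_mem_of_mem_supportedOn (cone x) (fun m hm => ?_) ih)
    rw [cone_of]
    exact of_mem_supportedOn (List.cons_subset_cons x hm)

lemma prism_of_mem_supportedOn (f g : X → Y) (l : List X) :
    prism f g (of l) ∈ supportedOn {m | ∀ a ∈ m, ∃ v ∈ l, a = f v ∨ a = g v} := by
  induction l with
  | nil => simp
  | cons x l ih =>
    rw [prism_of_cons]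
    refine sub_mem (of_mem_supportedOn ?_) (map_mem_of_mem_supportedOn (cone (f x)) ?_ ih)
    · simp only [Set.mem_ofPred_eq, List.forall_mem_cons, List.forall_mem_map]
      exact ⟨⟨x, by simp⟩, ⟨x, by simp⟩, fun v hv => ⟨v, by simp [hv]⟩⟩
    · intro m hm
      rw [cone_of]
      refine of_mem_supportedOn (List.forall_mem_cons.2 ⟨⟨x, by simp⟩, fun a ha => ?_⟩)
      obtain ⟨v, hv, hav⟩ := hm a ha
      exact ⟨v, List.mem_cons_of_mem x hv, hav⟩

end Support

section Translate

variable {G X : Type*} [AddMonoid G] [AddAction G X]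

/-- The action of a group element on chains. -/
noncomputable def translate (s : G) : OrderedChain X →+ OrderedChain X :=
  map (s +ᵥ ·)

lemma translate_of (s : G) (l : List X) : translate s (of l) = of (l.map (s +ᵥ ·)) :=
  map_of _ l

lemma translate_add (s t : G) (c : OrderedChain X) :
    translate (s + t) c = translate s (translate t c) := by
  rw [translate, translate, translate, map_map]
  congr 2
  exact funext fun v => add_vadd s t v

lemma translate_zero (c : OrderedChain X) : translate (0 : G) c = c := by
  have h : ((0 : G) +ᵥ · : X → X) = id := funext (zero_vadd _)
  rw [translate, h, map_id]

lemma boundary_translate (s : G) (c : OrderedChain X) :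
    boundary (translate s c) = translate s (boundary c) :=
  boundary_map _ c

end Translate

section PeriodicResolution

variable {p : ℕ} [NeZero p] {X : Type*} [AddAction (ZMod p) X]

/-- The differentials of the `2`-periodic resolution of `ZMod p`: the difference `τ - 1` for the
generator `τ` in even degrees and the norm `∑ τ^s` in odd degrees. -/
noncomputable def periodicMap (p : ℕ) [NeZero p] [AddAction (ZMod p) X] (d : ℕ) :
    OrderedChain X →+ OrderedChain X :=
  if Even d then translate (1 : ZMod p) - .id _ else ∑ s : ZMod p, translate s

lemma periodicMap_of_even {d : ℕ} (hd : Even d) (c : OrderedChain X) :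
    periodicMap p d c = translate (1 : ZMod p) c - c := by
  simp [periodicMap, hd]

lemma periodicMap_of_odd {d : ℕ} (hd : Odd d) (c : OrderedChain X) :
    periodicMap p d c = ∑ s : ZMod p, translate s c := by
  simp [periodicMap, Nat.not_even_iff_odd.2 hd]

lemma periodicMap_add_two (d : ℕ) (c : OrderedChain X) :
    periodicMap p (d + 2) c = periodicMap p d c := by
  simp [periodicMap, Nat.even_add]

lemma boundary_periodicMap (d : ℕ) (c : OrderedChain X) :
    boundary (periodicMap p d c) = periodicMap p d (boundary c) := by
  rcases Nat.even_or_odd d with hd | hd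
  · simp [periodicMap_of_even hd, boundary_translate]
  · simp [periodicMap_of_odd hd, boundary_translate]

lemma sum_translate_translate (t : ZMod p) (c : OrderedChain X) :
    ∑ s : ZMod p, translate s (translate t c) = ∑ s : ZMod p, translate s c := by
  simp_rw [← translate_add]
  exact Fintype.sum_equiv (Equiv.addRight t) _ _ fun _ => rfl

lemma translate_sum_translate (t : ZMod p) (c : OrderedChain X) :
    translate t (∑ s : ZMod p, translate s c) = ∑ s : ZMod p, translate s c := by
  simp_rw [map_sum, ← translate_add]
  exact Fintype.sum_equiv (Equiv.addLeft t) _ _ fun _ => rfl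

lemma periodicMap_succ_periodicMap (d : ℕ) (c : OrderedChain X) :
    periodicMap p (d + 1) (periodicMap p d c) = 0 := by
  rcases Nat.even_or_odd d with hd | hd
  · rw [periodicMap_of_odd hd.add_one, periodicMap_of_even hd]
    simp_rw [map_sub, Finset.sum_sub_distrib, sum_translate_translate, sub_self]
  · rw [periodicMap_of_even hd.add_one, periodicMap_of_odd hd,
      translate_sum_translate, sub_self]

/-- A chain of dimension `d` that is the top of a chain map of degrees `0, …, d` from the periodic
resolution of `ZMod p` to the chains of `X`. In a sphere with a free action of `ZMod p` its
projection to the orbit space represents a generator of the homology in degree `d` modulo `p`. -/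
def IsFundamentalChain (p : ℕ) [NeZero p] [AddAction (ZMod p) X] : ℕ → OrderedChain X → Prop
  | 0, y => ∃ v, y = of [v]
  | d + 1, y => ∃ x, IsFundamentalChain p d x ∧ boundary y = periodicMap p d x

lemma IsFundamentalChain.boundary_periodicMap_eq_zero {d : ℕ} {x : OrderedChain X}
    (hx : IsFundamentalChain p d x) : boundary (periodicMap p d x) = 0 := by
  rw [boundary_periodicMap]
  cases d with
  | zero =>
    obtain ⟨v, rfl⟩ := hx
    simp [boundary_of_cons, periodicMap_of_even, translate_of]
  | succ d =>
    obtain ⟨w, -, hw⟩ := hx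
    rw [hw, periodicMap_succ_periodicMap]

end PeriodicResolution

section DetectingCochains

variable {C X A : Type*} [AddCommGroup A]

/-- The simplices on which the labelling `g` of the vertices is constant. -/
def constLists (g : X → C) : Set (List X) := {l | ∀ v ∈ l, ∀ w ∈ l, g v = g w}

lemma constLists_of_subset {g : X → C} {l m : List X} (hl : l ∈ constLists g) (hm : m ⊆ l) :
    m ∈ constLists g :=
  fun v hv w hw => hl v (hm hv) w (hm hw)

/-- The cochain that evaluates `φ c` on the simplices whose first vertex has label `c`. -/
noncomputable def headwise (g : X → C) (φ : C → OrderedChain X →+ A) : OrderedChain X →+ A :=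
  FreeAbelianGroup.lift fun
    | [] => 0
    | v :: l => φ (g v) (of (v :: l))

@[simp] lemma headwise_of_nil (g : X → C) (φ : C → OrderedChain X →+ A) :
    headwise g φ (of []) = 0 := by
  simp [headwise]

lemma headwise_of_cons (g : X → C) (φ : C → OrderedChain X →+ A) (v : X) (l : List X) :
    headwise g φ (of (v :: l)) = φ (g v) (of (v :: l)) := by
  simp [headwise]

lemma headwise_eq_zero_of_mem_supportedOn (g : X → C) {φ : C → OrderedChain X →+ A}
    {T : Set (List X)} (hφ : ∀ a, ∀ l ∈ T, φ a (of l) = 0) {c : OrderedChain X}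
    (hc : c ∈ supportedOn T) : headwise g φ c = 0 := by
  refine eq_of_mem_supportedOn (headwise g φ) 0 (fun l hl => ?_) hc
  cases l with
  | nil => simp
  | cons v l => simpa [headwise_of_cons] using hφ (g v) _ hl

lemma headwise_boundary_eq_zero_of_mem_constLists {g : X → C} {φ : C → OrderedChain X →+ A}
    (hφ : ∀ a c, φ a (boundary c) = 0) {l : List X} (hl : l ∈ constLists g) :
    headwise g φ (boundary (of l)) = 0 := by
  cases l with
  | nil => simp
  | cons v l =>
    have hnil : φ (g v) (of []) = 0 := by simpa [boundary_of_cons] using hφ (g v) (of [v])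
    rw [← hφ (g v) (of (v :: l))]
    refine eq_of_mem_supportedOn _ _ (fun m hm => ?_) (boundary_of_mem_supportedOn_subset (v :: l))
    cases m with
    | nil => rw [headwise_of_nil, hnil]
    | cons w m => rw [headwise_of_cons, hl w (hm List.mem_cons_self) v List.mem_cons_self]

end DetectingCochains

section EquivariantLabels

variable {p : ℕ} {X A : Type*} [AddAction (ZMod p) X] [AddCommGroup A] {g : X → ZMod p}

lemma map_vadd_mem_constLists (hg : ∀ (s : ZMod p) v, g (s +ᵥ v) = s + g v) {l : List X}
    (hl : l ∈ constLists g) (s : ZMod p) : l.map (s +ᵥ ·) ∈ constLists g := by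
  simp only [constLists, Set.mem_ofPred_eq, List.forall_mem_map, hg]
  exact fun v hv w hw => congrArg (s + ·) (hl v hv w hw)

lemma headwise_translate_of_cons (hg : ∀ (s : ZMod p) v, g (s +ᵥ v) = s + g v)
    (φ : ZMod p → OrderedChain X →+ A) (s : ZMod p) (v : X) (l : List X) :
    headwise g φ (translate s (of (v :: l))) = φ (s + g v) (translate s (of (v :: l))) := by
  rw [translate_of, List.map_cons, headwise_of_cons, hg]

variable [NeZero p] {h : OrderedChain X →+ A}

/-- The simplices whose first vertex has label `0` form a fundamental domain of the action. -/
lemma headwise_periodicMap_of_odd (hg : ∀ (s : ZMod p) v, g (s +ᵥ v) = s + g v)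
    (hinv : ∀ (s : ZMod p) c, h (translate s c) = h c) (hnil : h (of []) = 0)
    {d : ℕ} (hd : Odd d) (c : OrderedChain X) :
    headwise g (fun a => if a = 0 then h else 0) (periodicMap p d c) = h c := by
  refine hom_ext (F := (headwise g fun a => if a = 0 then h else 0).comp (periodicMap p d))
    (fun l => ?_) c
  rw [AddMonoidHom.comp_apply, periodicMap_of_odd hd, map_sum]
  cases l with
  | nil => simp [translate_of, hnil]
  | cons v l =>
    simp_rw [headwise_translate_of_cons hg]
    rw [Finset.sum_eq_single_of_mem (-g v) (Finset.mem_univ _)]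
    · rw [neg_add_cancel, if_pos rfl, hinv]
    · intro s _ hs
      rw [if_neg (fun h0 => hs (eq_neg_of_add_eq_zero_left h0)), AddMonoidHom.zero_apply]

lemma sum_range_neg_val_sub {a : ZMod p → A} (ha : ∑ s, a s = 0) (c : ZMod p) :
    ∑ t ∈ Finset.range (-c).val, a t - ∑ t ∈ Finset.range (-(1 + c)).val, a (t + 1) = a 0 := by
  have sum_succ (n : ℕ) :
      ∑ t ∈ Finset.range n, a (t + 1) = ∑ t ∈ Finset.range (n + 1), a t - a 0 := by
    rw [Finset.sum_range_succ']
    simp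
  have sum_period : ∑ t ∈ Finset.range p, a t = 0 := by
    rw [← ha]
    exact Finset.sum_nbij' (fun t => (t : ZMod p)) ZMod.val (by simp) (by simp [ZMod.val_lt])
      (fun t ht => ZMod.val_cast_of_lt (Finset.mem_range.1 ht)) (by simp) (by simp)
  have hval : (-c).val = ((-(1 + c)).val + 1) % p := by
    rw [← ZMod.val_natCast]
    simp
  have hlt : (-(1 + c)).val + 1 ≤ p := ZMod.val_lt _
  rw [sum_succ, hval]
  rcases hlt.lt_or_eq with hlt | heq
  · rw [Nat.mod_eq_of_lt hlt, sub_sub_cancel]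
  · rw [heq, Nat.mod_self, sum_period, Finset.sum_range_zero, zero_sub, zero_sub, neg_neg]

lemma map_translate_of_map_translate_one (hone : ∀ c, h (translate (1 : ZMod p) c) = h c)
    (s : ZMod p) (c : OrderedChain X) : h (translate s c) = h c := by
  rw [← ZMod.natCast_zmod_val s]
  induction s.val with
  | zero => rw [Nat.cast_zero, translate_zero]
  | succ n ih => rw [Nat.cast_succ, add_comm, translate_add, hone, ih]

/-- Each simplex is assigned the partial sum of `h` along its orbit, up to the translate whose
first vertex has label `0`. -/
lemma headwise_periodicMap_of_even (hg : ∀ (s : ZMod p) v, g (s +ᵥ v) = s + g v)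
    (hsum : ∀ c, ∑ s : ZMod p, h (translate s c) = 0) (hnil : h (of []) = 0)
    {d : ℕ} (hd : Even d) (c : OrderedChain X) :
    headwise g (fun a => -∑ t ∈ Finset.range (-a).val, h.comp (translate (t : ZMod p)))
      (periodicMap p d c) = h c := by
  refine hom_ext (F := (headwise g fun a =>
    -∑ t ∈ Finset.range (-a).val, h.comp (translate (t : ZMod p))).comp (periodicMap p d))
    (fun l => ?_) c
  rw [AddMonoidHom.comp_apply, periodicMap_of_even hd, map_sub]
  cases l with
  | nil => simp [translate_of, hnil]
  | cons v l =>
    have partial_sums := sum_range_neg_val_sub (hsum (of (v :: l))) (g v)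
    rw [translate_zero] at partial_sums
    rw [headwise_translate_of_cons hg, headwise_of_cons, ← partial_sums]
    simp only [AddMonoidHom.neg_apply, AddMonoidHom.finsetSum_apply, AddMonoidHom.comp_apply,
      translate_add]
    abel

lemma exists_headwise_periodicMap (hg : ∀ (s : ZMod p) v, g (s +ᵥ v) = s + g v) {d : ℕ}
    (hd : ∀ c, h (periodicMap p (d + 1) c) = 0) (hnil : h (of []) = 0) :
    ∃ φ : ZMod p → OrderedChain X →+ A,
      (∀ a c, (∀ s : ZMod p, h (translate s c) = 0) → φ a c = 0) ∧
      ∀ c, headwise g φ (periodicMap p d c) = h c := by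
  rcases Nat.even_or_odd d with hd_even | hd_odd
  · refine ⟨_, fun a c hc => ?_, headwise_periodicMap_of_even hg (fun c => ?_) hnil hd_even⟩
    · simp [hc]
    · rw [← map_sum, ← periodicMap_of_odd hd_even.add_one, hd]
  · refine ⟨_, fun a c hc => ?_,
      headwise_periodicMap_of_odd hg (map_translate_of_map_translate_one fun c => ?_) hnil hd_odd⟩
    · have := hc 0
      rw [translate_zero] at this
      split_ifs <;> simp [this]
    · rw [← sub_eq_zero, ← map_sub, ← periodicMap_of_even hd_odd.add_one, hd]

end EquivariantLabels

section TuckerLemma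

variable {p : ℕ} [NeZero p] {X : Type*} [AddAction (ZMod p) X]

/-- The properties of a cochain that evaluates to `1` on the `d`-chain `x`, descends to the orbit
space and vanishes on the simplices in `T`; they are closed under the coboundary construction
`h ↦ headwise g φ ∘ boundary`. -/
structure IsDetecting (d : ℕ) (x : OrderedChain X) (T : Set (List X))
    (h : OrderedChain X →+ ZMod p) : Prop where
  apply_eq_one : h x = 1
  apply_periodicMap : ∀ c, h (periodicMap p (d + 1) c) = 0
  apply_boundary : ∀ c, h (boundary c) = 0
  apply_nil : h (of []) = 0
  apply_of_mem : ∀ l ∈ T, h (of l) = 0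

lemma exists_isDetecting_zero (v : X) :
    ∃ h : OrderedChain X →+ ZMod p, IsDetecting 0 (of [v]) ∅ h := by
  classical
  let augmentation : OrderedChain X →+ ZMod p :=
    FreeAbelianGroup.lift fun l => if l = [] then 1 else 0
  have augmentation_translate (s : ZMod p) (c : OrderedChain X) :
      augmentation (translate s c) = augmentation c :=
    hom_ext (F := augmentation.comp (translate s)) (by simp [augmentation, translate_of]) c
  refine ⟨augmentation.comp boundary, ?_, fun c => ?_, fun c => ?_, ?_, by simp⟩
  · simp [augmentation, boundary_of_cons]
  · simp [periodicMap_of_odd, boundary_translate, augmentation_translate]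
  · simp [boundary_boundary]
  · simp

lemma IsDetecting.exists_succ {d : ℕ} {x y : OrderedChain X} {T : Set (List X)}
    {h : OrderedChain X →+ ZMod p} (hh : IsDetecting d x T h)
    (hT : ∀ l ∈ T, (∀ s : ZMod p, l.map (s +ᵥ ·) ∈ T) ∧ ∀ m, m ⊆ l → m ∈ T)
    (hxy : boundary y = periodicMap p d x) {g : X → ZMod p}
    (hg : ∀ (s : ZMod p) v, g (s +ᵥ v) = s + g v) :
    ∃ h' : OrderedChain X →+ ZMod p, IsDetecting (d + 1) y (T ∪ constLists g) h' := by
  obtain ⟨φ, hφ, hφ_eq⟩ := exists_headwise_periodicMap hg hh.apply_periodicMap hh.apply_nil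
  refine ⟨(headwise g φ).comp boundary, ?_, fun c => ?_, fun c => ?_, by simp, ?_⟩
  · rw [AddMonoidHom.comp_apply, hxy, hφ_eq, hh.apply_eq_one]
  · rw [AddMonoidHom.comp_apply, periodicMap_add_two, boundary_periodicMap, hφ_eq,
      hh.apply_boundary]
  · rw [AddMonoidHom.comp_apply, boundary_boundary, map_zero]
  · rintro l (hl | hl)
    · refine headwise_eq_zero_of_mem_supportedOn g (fun a m hm => hφ a _ fun s => ?_)
        (boundary_of_mem_supportedOn_subset l)
      rw [translate_of]
      exact hh.apply_of_mem _ ((hT m ((hT l hl).2 m hm)).1 s)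
    · refine headwise_boundary_eq_zero_of_mem_constLists (fun a c => hφ a _ fun s => ?_) hl
      rw [← boundary_translate, hh.apply_boundary]

lemma IsFundamentalChain.exists_isDetecting {g : ℕ → X → ZMod p}
    (hg : ∀ j (s : ZMod p) v, g j (s +ᵥ v) = s + g j v) {d : ℕ} {x : OrderedChain X}
    (hx : IsFundamentalChain p d x) :
    ∃ h : OrderedChain X →+ ZMod p, IsDetecting d x {l | ∃ j < d, l ∈ constLists (g j)} h := by
  induction d generalizing x with
  | zero =>
    obtain ⟨v, rfl⟩ := hx
    simpa using exists_isDetecting_zero v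
  | succ d ih =>
    obtain ⟨w, hw, hwx⟩ := hx
    obtain ⟨h, hh⟩ := ih hw
    obtain ⟨h', hh'⟩ := hh.exists_succ (fun l ⟨j, hj, hl⟩ =>
      ⟨fun s => ⟨j, hj, map_vadd_mem_constLists (hg j) hl s⟩,
        fun m hm => ⟨j, hj, constLists_of_subset hl hm⟩⟩) hwx (hg d)
    refine ⟨h', ?_⟩
    convert hh' using 1
    ext l
    exact Nat.exists_lt_succ_right

/-- A form of Tucker's lemma for `ZMod p`. -/
theorem IsFundamentalChain.notMem_supportedOn (hp : p ≠ 1) {g : ℕ → X → ZMod p}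
    (hg : ∀ j (s : ZMod p) v, g j (s +ᵥ v) = s + g j v) {d : ℕ} {x : OrderedChain X}
    (hx : IsFundamentalChain p d x) : x ∉ supportedOn {l | ∃ j < d, l ∈ constLists (g j)} := by
  intro hmem
  obtain ⟨h, hh⟩ := hx.exists_isDetecting hg
  have : Nontrivial (ZMod p) := ZMod.nontrivial_iff.2 hp
  exact one_ne_zero (hh.apply_eq_one ▸ eq_of_mem_supportedOn h 0 hh.apply_of_mem hmem)

end TuckerLemma

section SmallChains

variable {X : Type*} [PseudoMetricSpace X] {δ δ' : ℝ} {K K' Q : Set X}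

/-- The simplices with vertices in `K` whose vertices are pairwise at distance less than `δ`. -/
def smallLists (δ : ℝ) (K : Set X) : Set (List X) :=
  {l | (∀ v ∈ l, v ∈ K) ∧ ∀ v ∈ l, ∀ w ∈ l, dist v w < δ}

/-- The chains of simplices with vertices in `K` and of diameter less than `δ`. -/
def smallChains (δ : ℝ) (K : Set X) : AddSubgroup (OrderedChain X) := supportedOn (smallLists δ K)

lemma prism_mem_smallChains {f g : X → X} (hQ : ∀ v ∈ K, f v ∈ Q ∧ g v ∈ Q)
    (hδ : ∀ v ∈ K, ∀ w ∈ K, dist v w < δ' →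
      dist (f v) (f w) < δ ∧ dist (f v) (g w) < δ ∧ dist (g v) (g w) < δ)
    {c : OrderedChain X} (hc : c ∈ smallChains δ' K) : prism f g c ∈ smallChains δ Q := by
  refine map_mem_of_mem_supportedOn _ ?_ hc
  rintro l ⟨hlK, hlδ⟩
  refine supportedOn_mono ?_ (prism_of_mem_supportedOn f g l)
  refine fun m hm => ⟨fun a ha => ?_, fun a ha b hb => ?_⟩
  · obtain ⟨v, hv, rfl | rfl⟩ := hm a ha
    exacts [(hQ v (hlK v hv)).1, (hQ v (hlK v hv)).2]
  · obtain ⟨v, hv, hav⟩ := hm a ha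
    obtain ⟨w, hw, hbw⟩ := hm b hb
    have hvw := hδ v (hlK v hv) w (hlK w hw) (hlδ v hv w hw)
    have hwv := hδ w (hlK w hw) v (hlK v hv) (hlδ w hw v hv)
    rcases hav with rfl | rfl <;> rcases hbw with rfl | rfl
    exacts [hvw.1, hvw.2.1, dist_comm (f w) _ ▸ hwv.2.1, hvw.2.2]

lemma cone_map_const_mem_smallChains {f : X → X} {u : X} (hf : ∀ v ∈ K, f v = u) (hu : u ∈ Q)
    (hδ : 0 < δ) {c : OrderedChain X} (hc : c ∈ smallChains δ' K) :
    cone u (map f c) ∈ smallChains δ Q := by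
  refine map_mem_of_mem_supportedOn ((cone u).comp (map f)) ?_ hc
  rintro l ⟨hlK, -⟩
  rw [AddMonoidHom.comp_apply, map_of, cone_of]
  have hmem : ∀ v ∈ u :: l.map f, v = u := by simpa using fun v hv => hf v (hlK v hv)
  exact of_mem_supportedOn ⟨fun v hv => hmem v hv ▸ hu,
    fun v hv w hw => by rwa [hmem v hv, hmem w hw, dist_self]⟩

lemma map_eq_self_of_mem_smallChains {f : X → X} (hf : ∀ v ∈ K, f v = v) {c : OrderedChain X}
    (hc : c ∈ smallChains δ K) : map f c = c := by
  refine eq_of_mem_supportedOn (map f) (.id _) ?_ hc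
  rintro l ⟨hlK, -⟩
  rw [map_of, AddMonoidHom.id_apply, List.map_congr_left fun v hv => hf v (hlK v hv), List.map_id']

/-- Sufficiently small cycles in `K` bound arbitrarily small chains in `Q`. -/
def FillsIn (K Q : Set X) : Prop :=
  ∀ δ > 0, ∃ δ' > 0, ∀ z ∈ smallChains δ' K, boundary z = 0 →
    ∃ w ∈ smallChains δ Q, boundary w = z

lemma exists_discretization (hK : IsCompact K) {H : X × unitInterval → X}
    (hH : ContinuousOn H (K ×ˢ Set.univ)) (hδ : 0 < δ) :
    ∃ δ' > 0, ∃ N : ℕ, ∃ t : ℕ → unitInterval, t 0 = 0 ∧ t N = 1 ∧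
      ∀ v ∈ K, ∀ w ∈ K, dist v w < δ' → ∀ s, dist (H (v, t s)) (H (w, t s)) < δ ∧
        dist (H (v, t s)) (H (w, t (s + 1))) < δ := by
  have hunif := (hK.prod isCompact_univ).uniformContinuousOn_of_continuous hH
  obtain ⟨η, hη, hηH⟩ := Metric.uniformContinuousOn_iff.1 hunif δ hδ
  obtain ⟨N, hN⟩ := exists_nat_one_div_lt hη
  have hN_pos : (0 : ℝ) < N + 1 := by positivity
  refine ⟨η, hη, N + 1, fun s => Set.projIcc 0 1 zero_le_one (s / (N + 1)), ?_, ?_,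
    fun v hv w hw hvw s => ⟨hηH _ ⟨hv, trivial⟩ _ ⟨hw, trivial⟩ ?_,
      hηH _ ⟨hv, trivial⟩ _ ⟨hw, trivial⟩ ?_⟩⟩
  · simp
  · simp [div_self hN_pos.ne']
  · simp [Prod.dist_eq, hvw]
  · rw [Prod.dist_eq, max_lt_iff]
    refine ⟨hvw,
      (((LipschitzWith.projIcc zero_le_one).dist_le_mul _ _).trans_eq ?_).trans_lt hN⟩
    rw [NNReal.coe_one, one_mul, Real.dist_eq, ← sub_div, Nat.cast_succ, sub_add_cancel_left,
      abs_div, abs_neg, abs_one, abs_of_pos hN_pos]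

theorem fillsIn_of_contraction (hK : IsCompact K) {u : X} (hu : u ∈ Q) {H : X × unitInterval → X}
    (hH : ContinuousOn H (K ×ˢ Set.univ)) (h0 : ∀ v ∈ K, H (v, 0) = v)
    (h1 : ∀ v ∈ K, H (v, 1) = u) (hQ : ∀ v ∈ K, ∀ t, H (v, t) ∈ Q) : FillsIn K Q := by
  intro δ hδ
  obtain ⟨δ', hδ', N, t, ht0, htN, ht⟩ := exists_discretization hK hH hδ
  let F (s : ℕ) (v : X) : X := H (v, t s)
  have hF0 : ∀ v ∈ K, F 0 v = v := fun v hv => by simp only [F, ht0, h0 v hv]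
  have hFN : ∀ v ∈ K, F N v = u := fun v hv => by simp only [F, htN, h1 v hv]
  refine ⟨δ', hδ', fun z hz hz0 =>
    ⟨cone u (map (F N) z) - ∑ s ∈ Finset.range N, prism (F s) (F (s + 1)) z, ?_, ?_⟩⟩
  · refine sub_mem (cone_map_const_mem_smallChains hFN hu hδ hz) (sum_mem fun s _ => ?_)
    exact prism_mem_smallChains (fun v hv => ⟨hQ v hv _, hQ v hv _⟩) (fun v hv w hw hvw =>
      ⟨(ht v hv w hw hvw s).1, (ht v hv w hw hvw s).2, (ht v hv w hw hvw (s + 1)).1⟩) hz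
  · rw [map_sub, boundary_sum_prism F N hz0, boundary_cone, boundary_map, hz0, map_zero, map_zero,
      sub_zero, sub_sub_cancel, map_eq_self_of_mem_smallChains hF0 hz]

end SmallChains

section FundamentalChains

open Pointwise

variable {p : ℕ} {X : Type*} [PseudoMetricSpace X] [AddAction (ZMod p) X]
  [IsIsometricVAdd (ZMod p) X] {δ : ℝ} {K : Set X}

lemma translate_mem_smallChains (s : ZMod p) {c : OrderedChain X} (hc : c ∈ smallChains δ K) :
    translate s c ∈ smallChains δ (⋃ t : ZMod p, t +ᵥ K) := by
  refine map_mem_of_mem_supportedOn _ ?_ hc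
  rintro l ⟨hlK, hlδ⟩
  rw [translate_of]
  refine of_mem_supportedOn ⟨?_, ?_⟩
  · simpa using fun v hv => ⟨s, Set.vadd_mem_vadd_set (hlK v hv)⟩
  · simpa using hlδ

variable [NeZero p]

lemma periodicMap_mem_smallChains (d : ℕ) {c : OrderedChain X} (hc : c ∈ smallChains δ K) :
    periodicMap p d c ∈ smallChains δ (⋃ t : ZMod p, t +ᵥ K) := by
  rcases Nat.even_or_odd d with hd | hd
  · rw [periodicMap_of_even hd]
    nth_rw 2 [← translate_zero (G := ZMod p) c]
    exact sub_mem (translate_mem_smallChains 1 hc) (translate_mem_smallChains 0 hc)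
  · rw [periodicMap_of_odd hd]
    exact sum_mem fun s _ => translate_mem_smallChains s hc

theorem exists_isFundamentalChain_mem_smallChains {F : ℕ → Set X} {n : ℕ} (h0 : (F 0).Nonempty)
    (hF : ∀ d < n, FillsIn (⋃ s : ZMod p, s +ᵥ F d) (F (d + 1))) (hδ : 0 < δ) :
    ∃ x ∈ smallChains δ (F n), IsFundamentalChain p n x := by
  induction n generalizing δ with
  | zero =>
    obtain ⟨v, hv⟩ := h0
    exact ⟨of [v], of_mem_supportedOn (by simp [smallLists, hv, hδ]), v, rfl⟩
  | succ n ih =>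
    obtain ⟨δ', hδ', hfill⟩ := hF n n.lt_succ_self δ hδ
    obtain ⟨x, hx, hx_fund⟩ := ih (fun d hd => hF d (hd.trans n.lt_succ_self)) hδ'
    obtain ⟨y, hy, hyx⟩ := hfill _ (periodicMap_mem_smallChains n hx)
      hx_fund.boundary_periodicMap_eq_zero
    exact ⟨y, hy, x, hx_fund, hyx⟩

end FundamentalChains

end OrderedChain

/-- A subset is contractible in the ambient space if its inclusion is nullhomotopic. -/
def ContractibleIn {X : Type*} [TopologicalSpace X] (U : Set X) : Prop :=
  ContinuousMap.Nullhomotopic (⟨Subtype.val, continuous_subtype_val⟩ : C(U, X))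

section SphereSegments

open Metric

variable {E : Type*} [NormedAddCommGroup E] [NormedSpace ℝ E]

lemma lineMap_ne_zero_of_ne_neg {v u : sphere (0 : E) 1} (h : v ≠ -u) (t : unitInterval) :
    AffineMap.lineMap (v : E) (u : E) (t : ℝ) ≠ 0 := by
  intro h0
  rw [AffineMap.lineMap_apply_module, add_eq_zero_iff_eq_neg] at h0
  have hnorm := congrArg norm h0
  rw [norm_neg, norm_smul, norm_smul, norm_eq_of_mem_sphere v, norm_eq_of_mem_sphere u,
    Real.norm_of_nonneg (sub_nonneg.2 t.2.2), Real.norm_of_nonneg t.2.1] at hnorm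
  have ht : 1 - (t : ℝ) = t := by linarith
  have ht_ne : (t : ℝ) ≠ 0 := fun h => by simp [h] at ht
  rw [ht, ← smul_neg] at h0
  exact h (Subtype.ext (smul_right_injective E ht_ne h0))

open Classical in
/-- The radial projection to the unit sphere of the segment from `v` to `u`. The value at a
parameter where the segment passes through the centre (which forces `v = -u`) is irrelevant; it is
chosen to be `u`. -/
noncomputable def sphereSegment (u : sphere (0 : E) 1) (x : sphere (0 : E) 1 × unitInterval) :
    sphere (0 : E) 1 :=
  if h : AffineMap.lineMap (x.1 : E) (u : E) (x.2 : ℝ) ≠ 0 then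
    ⟨NormedSpace.normalize (AffineMap.lineMap (x.1 : E) (u : E) (x.2 : ℝ)),
      mem_sphere_zero_iff_norm.2 (NormedSpace.norm_normalize h)⟩
  else u

lemma coe_sphereSegment {v u : sphere (0 : E) 1} (h : v ≠ -u) (t : unitInterval) :
    (sphereSegment u (v, t) : E) =
      NormedSpace.normalize (AffineMap.lineMap (v : E) (u : E) (t : ℝ)) := by
  rw [sphereSegment, dif_pos (lineMap_ne_zero_of_ne_neg h t)]

lemma sphereSegment_zero {v u : sphere (0 : E) 1} (h : v ≠ -u) : sphereSegment u (v, 0) = v := by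
  refine Subtype.ext ?_
  rw [coe_sphereSegment h, Set.Icc.coe_zero, AffineMap.lineMap_apply_zero,
    NormedSpace.normalize_eq_self_of_norm_eq_one (norm_eq_of_mem_sphere v)]

lemma sphereSegment_one {v u : sphere (0 : E) 1} (h : v ≠ -u) : sphereSegment u (v, 1) = u := by
  refine Subtype.ext ?_
  rw [coe_sphereSegment h, Set.Icc.coe_one, AffineMap.lineMap_apply_one,
    NormedSpace.normalize_eq_self_of_norm_eq_one (norm_eq_of_mem_sphere u)]

lemma continuousOn_sphereSegment (u : sphere (0 : E) 1) :
    ContinuousOn (sphereSegment u) ({-u}ᶜ ×ˢ Set.univ) := by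
  refine continuousOn_iff_continuous_domRestrict.2 (continuous_induced_rng.2 ?_)
  have hne (x : ({-u}ᶜ ×ˢ Set.univ : Set (sphere (0 : E) 1 × unitInterval))) :
      AffineMap.lineMap (x.1.1 : E) (u : E) (x.1.2 : ℝ) ≠ 0 :=
    lineMap_ne_zero_of_ne_neg x.2.1 _
  have hcont : Continuous fun x : ({-u}ᶜ ×ˢ Set.univ : Set (sphere (0 : E) 1 × unitInterval)) =>
      AffineMap.lineMap (x.1.1 : E) (u : E) (x.1.2 : ℝ) := by
    simp only [AffineMap.lineMap_apply_module]
    fun_prop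
  exact ((hcont.norm.inv₀ fun x => norm_ne_zero_iff.2 (hne x)).smul hcont).congr fun x =>
    (coe_sphereSegment x.2.1 _).symm

lemma sphereSegment_mem_convexCone (C : ConvexCone ℝ E) {v u : sphere (0 : E) 1}
    (hv : (v : E) ∈ C) (hu : (u : E) ∈ C) (h : v ≠ -u) (t : unitInterval) :
    (sphereSegment u (v, t) : E) ∈ C := by
  rw [coe_sphereSegment h]
  exact C.smul_mem (inv_pos.2 (norm_pos_iff.2 (lineMap_ne_zero_of_ne_neg h t)))
    (C.convex.lineMap_mem hv hu t.2)

lemma contractibleIn_sphere_of_notMem {U : Set (sphere (0 : E) 1)} {u : sphere (0 : E) 1}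
    (hu : -u ∉ U) : ContractibleIn U := by
  have hne (v : U) : (v : sphere (0 : E) 1) ≠ -u := fun h => hu (h ▸ v.2)
  refine ⟨u, ⟨⟨⟨fun x => sphereSegment u (x.2, x.1), ?_⟩,
    fun v => sphereSegment_zero (hne v), fun v => sphereSegment_one (hne v)⟩⟩⟩
  exact (continuousOn_sphereSegment u).comp_continuous (by fun_prop) fun x => ⟨hne x.2, trivial⟩

open OrderedChain in
lemma fillsIn_convexCone (C : ConvexCone ℝ E) {K : Set (sphere (0 : E) 1)} (hK : IsCompact K)
    (hKC : ∀ v ∈ K, (v : E) ∈ C) {u : sphere (0 : E) 1} (hu : (u : E) ∈ C) (hu_neg : -u ∉ K) :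
    FillsIn K {v : sphere (0 : E) 1 | (v : E) ∈ C} := by
  have hne : ∀ v ∈ K, v ≠ -u := fun v hv h => hu_neg (h ▸ hv)
  exact fillsIn_of_contraction hK hu
    ((continuousOn_sphereSegment u).mono (Set.prod_mono hne subset_rfl))
    (fun v hv => sphereSegment_zero (hne v hv)) (fun v hv => sphereSegment_one (hne v hv))
    fun v hv => sphereSegment_mem_convexCone C (hKC v hv) hu (hne v hv)

end SphereSegments

section CoveringMaps

variable {E B : Type*} [TopologicalSpace E] [TopologicalSpace B] {f : E → B}

/-- A local section of `f` turns a contraction upstairs into a contraction downstairs. -/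
lemma ContractibleIn.image_of_injOn (hf : Continuous f) (hf_open : IsOpenMap f) {V : Set E}
    (hV_open : IsOpen V) (hf_inj : Set.InjOn f V) (hV : ContractibleIn V) :
    ContractibleIn (f '' V) := by
  have hemb : Topology.IsOpenEmbedding (V.domRestrict f) :=
    .of_continuous_injective_isOpenMap (hf.comp continuous_subtype_val) hf_inj.injective
      (hf_open.domRestrict hV_open)
  let e : V ≃ₜ f '' V := hemb.toHomeomorph.trans (.setCongr (Set.range_domRestrict f V))
  have he (b : f '' V) : f (e.symm b) = b := congrArg Subtype.val (e.apply_symm_apply b)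
  have hcomp : (⟨Subtype.val, continuous_subtype_val⟩ : C(f '' V, B)) =
      (ContinuousMap.comp ⟨f, hf⟩ ⟨Subtype.val, continuous_subtype_val⟩).comp
        (e.symm : C(f '' V, V)) :=
    ContinuousMap.ext fun b => (he b).symm
  rw [ContractibleIn, hcomp]
  exact (hV.comp_right _).comp_left _

variable {G : Type*} [AddGroup G] [AddAction G E] {U : Set B}

lemma exists_equivariant_lift_of_contractibleIn (hf : IsAddQuotientCoveringMap f G)
    (hU : ContractibleIn U) :
    ∃ (b : B) (ε : E → E), ContinuousOn ε (f ⁻¹' U) ∧ (∀ v, f v ∈ U → f (ε v) = b) ∧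
      ∀ (s : G) v, ε (s +ᵥ v) = s +ᵥ ε v := by
  classical
  have := hf.toContinuousConstVAdd
  obtain ⟨b, ⟨H⟩⟩ := hU
  have hcov := hf.isCoveringMap
  let q : C(f ⁻¹' U, U) := ⟨U.restrictPreimage f, hf.continuous.restrictPreimage⟩
  let K : C(unitInterval × f ⁻¹' U, B) := ⟨fun x => H (x.1, q x.2), by fun_prop⟩
  let incl : C(f ⁻¹' U, E) := ⟨Subtype.val, continuous_subtype_val⟩
  have hK_zero : ∀ a, K (0, a) = f (incl a) := fun a => H.apply_zero (q a)
  let L := hcov.liftHomotopy K incl hK_zero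
  have hL_zero : ∀ a, L (0, a) = a.1 := hcov.liftHomotopy_zero K incl hK_zero
  have hL_lifts : ∀ x, f (L x) = K x := congrFun (hcov.liftHomotopy_lifts K incl hK_zero)
  have hmem (s : G) (a : f ⁻¹' U) : s +ᵥ a.1 ∈ f ⁻¹' U := by
    rw [Set.mem_preimage, hf.map_vadd]
    exact a.2
  have hL_vadd (s : G) (a : f ⁻¹' U) : L (1, ⟨s +ᵥ a.1, hmem s a⟩) = s +ᵥ L (1, a) := by
    refine congrFun (hcov.eq_of_comp_eq (g₁ := fun t => L (t, ⟨s +ᵥ a.1, hmem s a⟩))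
      (g₂ := fun t => s +ᵥ L (t, a)) (by fun_prop) (by fun_prop) (funext fun t => ?_) 0 ?_) 1
    · rw [Function.comp_apply, Function.comp_apply, hf.map_vadd, hL_lifts, hL_lifts]
      exact congrArg (fun c => H (t, c)) (Subtype.ext (hf.map_vadd s))
    · rw [hL_zero, hL_zero]
  let ε (v : E) : E := if hv : f v ∈ U then L (1, ⟨v, hv⟩) else v
  have hε (a : f ⁻¹' U) : ε a = L (1, a) := dif_pos a.2
  refine ⟨b, ε, ?_, fun v hv => ?_, fun s v => ?_⟩
  · exact continuousOn_iff_continuous_domRestrict.2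
      ((L.continuous.comp (Continuous.prodMk_right 1)).congr fun a => (hε a).symm)
  · rw [hε ⟨v, hv⟩, hL_lifts]
    exact H.apply_one _
  · by_cases hv : f v ∈ U
    · rw [hε ⟨v, hv⟩, hε ⟨s +ᵥ v, hmem s ⟨v, hv⟩⟩, hL_vadd s ⟨v, hv⟩]
    · simp only [ε, hf.map_vadd, hv, dif_neg, not_false_iff]

lemma exists_equivariant_label (hf : IsAddQuotientCoveringMap f G) :
    ∃ σ : E → G, ∀ (s : G) v, σ (s +ᵥ v) = s + σ v := by
  have := hf.isCancelVAdd
  have hsec (v : E) : ∃ s : G, s +ᵥ Function.surjInv hf.surjective (f v) = v :=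
    hf.apply_eq_iff_mem_orbit.1 (Function.surjInv_eq hf.surjective (f v)).symm
  choose σ hσ using hsec
  refine ⟨σ, fun s v => IsCancelVAdd.right_cancel _ _ (Function.surjInv hf.surjective (f v)) ?_⟩
  rw [add_vadd, hσ, ← hf.map_vadd s, hσ]

/-- Lifting a contraction of `U` moves each point over `U` to a point of a single fibre, which is a
torsor under `G`; its position there is the label. -/
theorem exists_equivariant_label_of_contractibleIn (hf : IsAddQuotientCoveringMap f G)
    (hU_open : IsOpen U) (hU : ContractibleIn U) :
    ∃ γ : E → G, (∀ (s : G) v, γ (s +ᵥ v) = s + γ v) ∧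
      ∀ c, IsOpen (f ⁻¹' U ∩ γ ⁻¹' {c}) := by
  obtain ⟨b, ε, hε, hεb, hε_vadd⟩ := exists_equivariant_lift_of_contractibleIn hf hU
  obtain ⟨σ, hσ⟩ := exists_equivariant_label hf
  have hV_open : IsOpen (f ⁻¹' U) := hU_open.preimage hf.continuous
  refine ⟨σ ∘ ε, fun s v => ?_, fun c => isOpen_iff_mem_nhds.2 ?_⟩
  · rw [Function.comp_apply, hε_vadd, hσ, Function.comp_apply]
  · rintro v ⟨hv, hvc⟩
    obtain ⟨N, hN, hN_disjoint⟩ := hf.disjoint (ε v)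
    have hV := hV_open.mem_nhds hv
    filter_upwards [hV, (hε.continuousAt hV).preimage_mem_nhds hN] with w hw hwN
    have hfiber : f (ε w) = f (ε v) := (hεb w hw).trans (hεb v hv).symm
    obtain ⟨s, hs : s +ᵥ ε v = ε w⟩ := hf.apply_eq_iff_mem_orbit.1 hfiber
    have hs_zero : s = 0 := hN_disjoint s ⟨ε w, ⟨ε v, mem_of_mem_nhds hN, hs⟩, hwN⟩
    rw [hs_zero, zero_vadd] at hs
    exact ⟨hw, by rwa [Set.mem_preimage, Function.comp_apply, ← hs]⟩

end CoveringMaps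

section LowerBound

open OrderedChain Pointwise

variable {p : ℕ} {E B : Type*} [PseudoMetricSpace E] [CompactSpace E]
  [AddAction (ZMod p) E] [TopologicalSpace B] {f : E → B} {m : ℕ} {U : Fin (m + 1) → Set B}

lemma exists_smallLists_subset_constLists (hf : IsAddQuotientCoveringMap f (ZMod p))
    (hU_open : ∀ i, IsOpen (U i)) (hU_cover : ⋃ i, U i = Set.univ)
    (hU : ∀ i, ContractibleIn (U i)) :
    ∃ g : ℕ → E → ZMod p, (∀ j (s : ZMod p) v, g j (s +ᵥ v) = s + g j v) ∧
      ∃ δ > 0, smallLists δ Set.univ ⊆ {l | ∃ j < m + 1, l ∈ constLists (g j)} := by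
  choose γ hγ hγ_open using fun i =>
    exists_equivariant_label_of_contractibleIn hf (hU_open i) (hU i)
  have hcover : Set.univ ⊆ ⋃ x : Fin (m + 1) × ZMod p, f ⁻¹' U x.1 ∩ γ x.1 ⁻¹' {x.2} := by
    intro v _
    obtain ⟨i, hi⟩ := Set.mem_iUnion.1 (hU_cover ▸ Set.mem_univ (f v))
    exact Set.mem_iUnion.2 ⟨(i, γ i v), hi, rfl⟩
  obtain ⟨δ, hδ, hδ_ball⟩ :=
    lebesgue_number_lemma_of_metric isCompact_univ (fun x : Fin (m + 1) × ZMod p =>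
      hγ_open x.1 x.2) hcover
  refine ⟨fun j => γ (Fin.ofNat (m + 1) j), fun j => hγ _, δ, hδ, ?_⟩
  rintro l ⟨-, hl⟩
  cases l with
  | nil => exact ⟨0, m.succ_pos, by simp [constLists]⟩
  | cons v l =>
    obtain ⟨⟨i, c⟩, hi⟩ := hδ_ball v trivial
    have hlabel : ∀ w ∈ v :: l, γ i w = c := fun w hw =>
      (hi (hl w hw v List.mem_cons_self)).2
    refine ⟨i, i.2, fun w hw w' hw' => ?_⟩
    simp only [Fin.ofNat_val_eq_self, hlabel w hw, hlabel w' hw']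

theorem le_of_fillsIn_of_contractibleIn [NeZero p] [IsIsometricVAdd (ZMod p) E] (hp : p ≠ 1)
    (hf : IsAddQuotientCoveringMap f (ZMod p)) {F : ℕ → Set E} {n : ℕ} (h0 : (F 0).Nonempty)
    (hF : ∀ d < n, FillsIn (⋃ s : ZMod p, s +ᵥ F d) (F (d + 1)))
    (hU_open : ∀ i, IsOpen (U i)) (hU_cover : ⋃ i, U i = Set.univ)
    (hU : ∀ i, ContractibleIn (U i)) : n ≤ m := by
  by_contra! hmn
  obtain ⟨g, hg, δ, hδ, hsmall⟩ := exists_smallLists_subset_constLists hf hU_open hU_cover hU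
  obtain ⟨x, hx_small, hx⟩ := exists_isFundamentalChain_mem_smallChains h0 hF hδ
  refine hx.notMem_supportedOn hp hg (supportedOn_mono ?_ hx_small)
  intro l hl
  obtain ⟨j, hj, hlj⟩ := hsmall ⟨fun v _ => Set.mem_univ v, hl.2⟩
  exact ⟨j, hj.trans_le hmn, hlj⟩

end LowerBound

section RootsOfUnity

/-- The open sector of opening angle `2π / p` about the positive real axis, on which `w ↦ w ^ p` is
injective. -/
def rootSector (p : ℕ) : Set ℂ :=
  {w ∈ Complex.slitPlane | w.arg ∈ Set.Ioo (-(Real.pi / p)) (Real.pi / p)}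

variable {p : ℕ}

lemma isOpen_rootSector : IsOpen (rootSector p) :=
  Complex.continuousOn_arg.isOpen_inter_preimage Complex.isOpen_slitPlane isOpen_Ioo

variable [NeZero p]

lemma injOn_pow_rootSector : Set.InjOn (fun w : ℂ => w ^ p) (rootSector p) :=
  Set.LeftInvOn.injOn (f₁' := fun x : ℂ => x ^ (p⁻¹ : ℂ)) fun _ hw =>
    Complex.pow_cpow_nat_inv (NeZero.ne p) hw.2.1 hw.2.2.le

lemma exp_mem_rootSector {y : ℂ} (hy : |y.im| < Real.pi / p) : Complex.exp y ∈ rootSector p := by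
  obtain ⟨hlt, hgt⟩ := abs_lt.1 (hy.trans_le (div_le_self Real.pi_nonneg
    (Nat.one_le_cast.2 (NeZero.one_le (n := p)))))
  have harg : (Complex.exp y).arg = y.im := by
    rw [← Complex.log_im, Complex.log_exp hlt hgt.le]
  refine ⟨Complex.mem_slitPlane_iff_arg.2 ⟨?_, Complex.exp_ne_zero y⟩, ?_⟩
  · rw [harg]
    exact hgt.ne
  · rw [harg]
    exact abs_lt.1 hy

lemma exists_mem_rootSector_pow_eq {x : ℂ} (hx : x ∈ Complex.slitPlane) :
    ∃ w ∈ rootSector p, w ^ p = x := by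
  have hp : (0 : ℝ) < p := Nat.cast_pos.2 (NeZero.pos p)
  refine ⟨Complex.exp (Complex.log x / p), exp_mem_rootSector ?_, ?_⟩
  · rw [Complex.div_natCast_im, Complex.log_im, abs_div, abs_of_pos hp]
    exact div_lt_div_of_pos_right (abs_lt.2 ⟨x.neg_pi_lt_arg,
      x.arg_le_pi.lt_of_ne (Complex.slitPlane_arg_ne_pi hx)⟩) hp
  · rw [← Complex.exp_nat_mul, mul_div_cancel₀ _ (Nat.cast_ne_zero.2 (NeZero.ne p)),
      Complex.exp_log (Complex.slitPlane_ne_zero hx)]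

variable (p) in
lemma exists_circle_pow_eq_neg_one : ∃ ω : Circle, ω ^ p = -1 := by
  refine ⟨Circle.exp (Real.pi / p), Circle.ext ?_⟩
  rw [← Circle.exp_natCast_mul, mul_div_cancel₀ _ (Nat.cast_ne_zero.2 (NeZero.ne p)),
    Circle.coe_exp, Complex.exp_pi_mul_I, Circle.coe_neg, Circle.coe_one]

lemma toCircle_pow (s : ZMod p) : ZMod.toCircle s ^ p = 1 := by
  rw [← AddChar.map_nsmul_eq_pow, ZModModule.char_nsmul_eq_zero, AddChar.map_zero_eq_one]

lemma exists_toCircle_eq {ζ : ℂ} (hζ : ζ ^ p = 1) : ∃ s : ZMod p, ZMod.toCircle s = ζ := by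
  obtain ⟨i, -, hi⟩ := (Complex.isPrimitiveRoot_exp p (NeZero.ne p)).eq_pow_of_pow_eq_one hζ
  refine ⟨i, ?_⟩
  rw [ZMod.toCircle_natCast, ← hi, ← Complex.exp_nat_mul]
  ring_nf

end RootsOfUnity

/-- The unit sphere of `ℂ^k`, as the universal cover of the lens space with parameters `ℓ`: a copy
of the type of unit vectors that carries the action of `ZMod p` determined by `ℓ`. -/
def LensCover (_p : ℕ) {k : ℕ} (_ℓ : Fin k → ℤ) : Type :=
  Metric.sphere (0 : EuclideanSpace ℂ (Fin k)) 1

namespace LensCover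

section Action

variable {p k : ℕ} {ℓ : Fin k → ℤ}

noncomputable instance : MetricSpace (LensCover p ℓ) :=
  inferInstanceAs (MetricSpace (Metric.sphere (0 : EuclideanSpace ℂ (Fin k)) 1))

instance : CompactSpace (LensCover p ℓ) :=
  inferInstanceAs (CompactSpace (Metric.sphere (0 : EuclideanSpace ℂ (Fin k)) 1))

instance : CoeFun (LensCover p ℓ) fun _ => Fin k → ℂ where
  coe v := v.1

@[ext] lemma ext {v w : LensCover p ℓ} (h : ∀ j, v j = w j) : v = w :=
  Subtype.ext (PiLp.ext h)

lemma norm_val (v : LensCover p ℓ) : ‖v.1‖ = 1 := mem_sphere_zero_iff_norm.1 v.2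

lemma continuous_apply (j : Fin k) : Continuous fun v : LensCover p ℓ => v j :=
  (EuclideanSpace.proj (𝕜 := ℂ) j).continuous.comp continuous_subtype_val

lemma exists_apply_ne_zero (v : LensCover p ℓ) : ∃ j, v j ≠ 0 := by
  by_contra! h
  have hv : v.1 = 0 := PiLp.ext h
  simpa [hv] using v.norm_val

variable [NeZero p]

variable (ℓ) in
/-- The diagonal isometry of `ℂ^k` by which `s : ZMod p` acts on the sphere. -/
noncomputable def deckRotation (s : ZMod p) :
    EuclideanSpace ℂ (Fin k) ≃ₗᵢ[ℝ] EuclideanSpace ℂ (Fin k) :=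
  LinearIsometryEquiv.piLpCongrRight 2 fun j => rotation (ZMod.toCircle (s * (ℓ j : ZMod p)))

noncomputable instance : VAdd (ZMod p) (LensCover p ℓ) where
  vadd s v := ⟨deckRotation ℓ s v.1, mem_sphere_zero_iff_norm.2
    (((deckRotation ℓ s).norm_map v.1).trans v.norm_val)⟩

lemma vadd_apply (s : ZMod p) (v : LensCover p ℓ) (j : Fin k) :
    (s +ᵥ v) j = ZMod.toCircle (s * (ℓ j : ZMod p)) * v j := rfl

noncomputable instance : AddAction (ZMod p) (LensCover p ℓ) where
  zero_vadd v := by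
    ext j
    rw [vadd_apply, zero_mul, AddChar.map_zero_eq_one, Circle.coe_one, one_mul]
  add_vadd s t v := by
    ext j
    rw [vadd_apply, vadd_apply, vadd_apply, add_mul, AddChar.map_add_eq_mul, Circle.coe_mul,
      mul_assoc]

instance : IsIsometricVAdd (ZMod p) (LensCover p ℓ) where
  isometry_vadd s := Isometry.of_dist_eq fun v w => (deckRotation ℓ s).isometry.dist_eq v.1 w.1

lemma vadd_apply_right_cancel {s t : ZMod p} {v : LensCover p ℓ} {j : Fin k}
    (hℓ : IsCoprime (ℓ j) p) (hj : v j ≠ 0) (h : (s +ᵥ v) j = (t +ᵥ v) j) : s = t :=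
  ((ZMod.coe_int_isUnit_iff_isCoprime _ p).2 hℓ.symm).mul_right_cancel
    (ZMod.injective_toCircle (Circle.ext (mul_right_cancel₀ hj h)))

lemma isCancelVAdd (hℓ : ∀ j, IsCoprime (ℓ j) p) : IsCancelVAdd (ZMod p) (LensCover p ℓ) where
  right_cancel' _ _ v h :=
    let ⟨j, hj⟩ := v.exists_apply_ne_zero
    vadd_apply_right_cancel (hℓ j) hj (congrArg (fun w : LensCover p ℓ => w j) h)

lemma lensRel_iff_mem_orbit {v w : LensCover p ℓ} :
    lensRel p k ℓ v w ↔ w ∈ AddAction.orbit (ZMod p) v := by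
  have hexp (m : ℤ) (j : Fin k) : Complex.exp (2 * Real.pi * Complex.I * m * ℓ j / p) =
      ZMod.toCircle ((m : ZMod p) * (ℓ j : ZMod p)) := by
    rw [← Int.cast_mul, ZMod.toCircle_intCast, Int.cast_mul, mul_assoc]
  constructor
  · rintro ⟨m, hm⟩
    exact ⟨m, ext fun j => ((hm j).trans (by rw [hexp]; rfl)).symm⟩
  · rintro ⟨s, rfl⟩
    obtain ⟨m, rfl⟩ := ZMod.intCast_surjective s
    exact ⟨m, fun j => by rw [hexp]; rfl⟩

variable (p ℓ) in
/-- The projection of the sphere to the lens space. -/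
def proj (v : LensCover p ℓ) : LensSpace p k ℓ := Quot.mk _ v

lemma proj_eq_proj_iff {v w : LensCover p ℓ} :
    proj p ℓ v = proj p ℓ w ↔ v ∈ AddAction.orbit (ZMod p) w := by
  let S := AddAction.orbitRel (ZMod p) (LensCover p ℓ)
  have hS {v w : LensCover p ℓ} : lensRel p k ℓ v w ↔ S v w :=
    lensRel_iff_mem_orbit.trans AddAction.mem_orbit_symm
  have hequiv : Equivalence (lensRel p k ℓ) :=
    ⟨fun v => hS.2 (S.refl v), fun h => hS.2 (S.symm (hS.1 h)),
      fun h h' => hS.2 (S.trans (hS.1 h) (hS.1 h'))⟩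
  exact (hequiv.quot_mk_eq_iff v w).trans hS

theorem isAddQuotientCoveringMap_proj (hℓ : ∀ j, IsCoprime (ℓ j) p) :
    IsAddQuotientCoveringMap (proj p ℓ) (ZMod p) := by
  have := isCancelVAdd hℓ
  have hquot : Topology.IsQuotientMap (proj p ℓ) := isQuotientMap_quot_mk
  exact hquot.isAddQuotientCoveringMap_of_properlyDiscontinuousVAdd proj_eq_proj_iff

end Action

section Flag

open Pointwise
open scoped ComplexOrder

variable {p k : ℕ} {ℓ : Fin k → ℤ}

/-- The convex cones used to sweep out the sphere of `ℂ^k`: the vectors whose coordinates beyond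
`d / 2` vanish and, if `d` is even, whose coordinate `d / 2` is a nonnegative real. For `d < 2 * k`
the unit vectors in it form a `d`-sphere if `d` is odd and a closed `d`-disc if `d` is even. -/
def flagCone (k d : ℕ) : ConvexCone ℝ (EuclideanSpace ℂ (Fin k)) where
  carrier := {v | ∀ j : Fin k, (d < 2 * j → v j = 0) ∧ (d = 2 * j → 0 ≤ v j)}
  smul_mem' c hc v hv j :=
    ⟨fun h => by rw [PiLp.smul_apply, (hv j).1 h, smul_zero],
      fun h => smul_nonneg hc.le ((hv j).2 h)⟩
  add_mem' v hv w hw j :=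
    ⟨fun h => by rw [PiLp.add_apply, (hv j).1 h, (hw j).1 h, add_zero],
      fun h => add_nonneg ((hv j).2 h) ((hw j).2 h)⟩

variable (p ℓ) in
/-- The part of the sphere in `flagCone k d`. -/
def flag (d : ℕ) : Set (LensCover p ℓ) := {v | v.1 ∈ flagCone k d}

lemma isClosed_flag (d : ℕ) : IsClosed (flag p ℓ d) := by
  have hset : flag p ℓ d =
      ⋂ j : Fin k, {v | d < 2 * (j : ℕ) → v j = 0} ∩ {v | d = 2 * (j : ℕ) → 0 ≤ v j} := by
    ext v
    simp only [Set.mem_iInter]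
    rfl
  rw [hset]
  exact isClosed_iInter fun j =>
    (isClosed_imp isOpen_const (isClosed_eq (continuous_apply j) continuous_const)).inter
      (isClosed_imp isOpen_const (isClosed_le continuous_const (continuous_apply j)))

/-- The point of the sphere with `j`-th coordinate `c`. -/
noncomputable def axisPoint (j : Fin k) (c : Circle) : LensCover p ℓ :=
  ⟨EuclideanSpace.single j (c : ℂ), mem_sphere_zero_iff_norm.2 <| by
    rw [PiLp.norm_single, Circle.norm_coe]⟩

lemma axisPoint_apply_self (j : Fin k) (c : Circle) : (axisPoint j c : LensCover p ℓ) j = c :=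
  PiLp.single_eq_same ..

lemma axisPoint_apply_of_ne {i j : Fin k} (h : i ≠ j) (c : Circle) :
    (axisPoint j c : LensCover p ℓ) i = 0 :=
  PiLp.single_eq_of_ne _ h _

lemma axisPoint_mem_flag {d : ℕ} {i : Fin k} (hd : 2 * i ≤ d) {c : Circle}
    (hc : d = 2 * i → 0 ≤ (c : ℂ)) : axisPoint i c ∈ flag p ℓ d := by
  intro j
  rcases eq_or_ne j i with rfl | hji
  · rw [axisPoint_apply_self]
    exact ⟨fun h => absurd hd h.not_ge, hc⟩
  · rw [axisPoint_apply_of_ne hji]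
    exact ⟨fun _ => rfl, fun _ => le_rfl⟩

variable [NeZero p]

lemma vadd_mem_flag_succ {d : ℕ} {v : LensCover p ℓ} (hv : v ∈ flag p ℓ d) (s : ZMod p) :
    s +ᵥ v ∈ flag p ℓ (d + 1) := by
  have hzero (j : Fin k) (hj : d < 2 * j) : (s +ᵥ v) j = 0 := by
    rw [vadd_apply, (hv j).1 hj, mul_zero]
  exact fun j => ⟨fun h => hzero j (by omega), fun h => (hzero j (by omega)).ge⟩

lemma fillsIn_flag {d : ℕ} {u : LensCover p ℓ} (hu : u ∈ flag p ℓ (d + 1))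
    (hu_neg : ∃ j, ∀ s : ZMod p, ∀ v ∈ flag p ℓ d, (s +ᵥ v) j ≠ -u j) :
    OrderedChain.FillsIn (⋃ s : ZMod p, s +ᵥ flag p ℓ d) (flag p ℓ (d + 1)) := by
  obtain ⟨j, hj⟩ := hu_neg
  refine fillsIn_convexCone (flagCone k (d + 1))
    (isCompact_iUnion fun s => (isClosed_flag d).isCompact.vadd s) ?_ hu ?_
  · intro w hw
    obtain ⟨s, v, hv, rfl⟩ := Set.mem_iUnion.1 hw
    exact vadd_mem_flag_succ hv s
  · intro h
    obtain ⟨s, v, hv, hsv⟩ := Set.mem_iUnion.1 h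
    exact hj s v hv (congrArg (fun w : LensCover p ℓ => w j) hsv)

lemma fillsIn_flag_even {i : ℕ} (hi : i < k) :
    OrderedChain.FillsIn (⋃ s : ZMod p, s +ᵥ flag p ℓ (2 * i)) (flag p ℓ (2 * i + 1)) := by
  obtain ⟨ω, hω⟩ := exists_circle_pow_eq_neg_one p
  let j : Fin k := ⟨i, hi⟩
  refine fillsIn_flag (u := axisPoint j (-ω))
    (axisPoint_mem_flag (i := j) (Nat.le_succ (2 * i)) fun h => absurd h (Nat.succ_ne_self _))
    ⟨j, fun s v hv h => ?_⟩
  rw [vadd_apply, axisPoint_apply_self, Circle.coe_neg, neg_neg] at h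
  have hv_one : v j = 1 := by
    have hnorm : ‖v j‖ = 1 := by
      simpa only [norm_mul, Circle.norm_coe, one_mul] using congrArg norm h
    rw [← Complex.norm_of_nonneg' ((hv j).2 rfl), hnorm, Complex.ofReal_one]
  rw [hv_one, mul_one] at h
  have hpow := toCircle_pow (s * (ℓ j : ZMod p))
  rw [Circle.ext h, hω] at hpow
  exact Circle.neg_ne_self 1 hpow

lemma fillsIn_flag_odd {i : ℕ} (hi : i + 1 < k) :
    OrderedChain.FillsIn (⋃ s : ZMod p, s +ᵥ flag p ℓ (2 * i + 1)) (flag p ℓ (2 * i + 2)) := by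
  let j : Fin k := ⟨i + 1, hi⟩
  refine fillsIn_flag (u := axisPoint j 1) (axisPoint_mem_flag (i := j) le_rfl fun _ => zero_le_one)
    ⟨j, fun s v hv => ?_⟩
  rw [vadd_apply, (hv j).1 (Nat.lt_succ_self _), mul_zero, axisPoint_apply_self]
  exact (neg_ne_zero.2 (Circle.coe_ne_zero 1)).symm

theorem le_of_contractibleIn_cover (hp : p ≠ 1) (hk : k ≠ 0) (hℓ : ∀ j, IsCoprime (ℓ j) p) {m : ℕ}
    {U : Fin (m + 1) → Set (LensSpace p k ℓ)} (hU_open : ∀ i, IsOpen (U i))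
    (hU_cover : ⋃ i, U i = Set.univ) (hU : ∀ i, ContractibleIn (U i)) : 2 * k - 1 ≤ m := by
  let j : Fin k := ⟨0, Nat.pos_of_ne_zero hk⟩
  refine le_of_fillsIn_of_contractibleIn hp (isAddQuotientCoveringMap_proj hℓ)
    (F := flag p ℓ) ⟨axisPoint j 1, axisPoint_mem_flag (i := j) le_rfl fun _ => zero_le_one⟩
    (fun d hd => ?_) hU_open hU_cover hU
  obtain ⟨i, rfl | rfl⟩ := d.even_or_odd'
  · exact fillsIn_flag_even (by omega)
  · exact fillsIn_flag_odd (by omega)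

end Flag

section Charts

variable {p k : ℕ} {ℓ : Fin k → ℤ} {j : Fin k} {c : Circle}

variable (p ℓ) in
/-- The points of the sphere whose `j`-th coordinate lies in the sector of opening angle `2π / p`
about the ray through `c`. -/
def chart (j : Fin k) (c : Circle) : Set (LensCover p ℓ) := {v | v j / c ∈ rootSector p}

lemma isOpen_chart : IsOpen (chart p ℓ j c) :=
  isOpen_rootSector.preimage ((continuous_apply j).div_const _)

lemma contractibleIn_chart : ContractibleIn (chart p ℓ j c) := by
  refine contractibleIn_sphere_of_notMem
    (u := (axisPoint j c : LensCover p ℓ)) fun h => ?_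
  have hslit : -(axisPoint j c : LensCover p ℓ) j / c ∈ Complex.slitPlane := h.1
  rw [axisPoint_apply_self, neg_div, div_self c.coe_ne_zero] at hslit
  norm_num [Complex.mem_slitPlane_iff] at hslit

variable [NeZero p]

lemma vadd_apply_pow (s : ZMod p) (v : LensCover p ℓ) : (s +ᵥ v) j ^ p = v j ^ p := by
  rw [vadd_apply, mul_pow, ← Circle.coe_pow, toCircle_pow, Circle.coe_one, one_mul]

lemma exists_vadd_apply_eq (hℓ : IsCoprime (ℓ j) p) {v : LensCover p ℓ} (hj : v j ≠ 0) {z : ℂ}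
    (hz : z ^ p = v j ^ p) : ∃ s : ZMod p, (s +ᵥ v) j = z := by
  obtain ⟨t, ht⟩ := exists_toCircle_eq (ζ := z / v j)
    (by rw [div_pow, hz, div_self (pow_ne_zero _ hj)])
  obtain ⟨s, rfl⟩ := ((ZMod.coe_int_isUnit_iff_isCoprime _ p).2 hℓ.symm).dvd (a := t)
  exact ⟨s, by rw [vadd_apply, mul_comm s, ht, div_mul_cancel₀ _ hj]⟩

lemma injOn_proj_chart (hℓ : IsCoprime (ℓ j) p) : Set.InjOn (proj p ℓ) (chart p ℓ j c) := by
  intro v hv w hw hvw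
  obtain ⟨s, hs⟩ := proj_eq_proj_iff.1 hvw
  change s +ᵥ w = v at hs
  subst hs
  have hquot : (s +ᵥ w) j / c = w j / c :=
    injOn_pow_rootSector hv hw (by simp only [div_pow, vadd_apply_pow])
  have hsw : (s +ᵥ w) j = ((0 : ZMod p) +ᵥ w) j := by
    rw [zero_vadd]
    exact (div_left_inj' c.coe_ne_zero).1 hquot
  have hj : w j ≠ 0 := fun h => Complex.slitPlane_ne_zero hw.1 (by rw [h, zero_div])
  rw [vadd_apply_right_cancel hℓ hj hsw, zero_vadd]

lemma proj_mem_image_chart (hℓ : IsCoprime (ℓ j) p) {v : LensCover p ℓ}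
    (hv : (v j / c) ^ p ∈ Complex.slitPlane) : proj p ℓ v ∈ proj p ℓ '' chart p ℓ j c := by
  obtain ⟨w, hw, hwv⟩ := exists_mem_rootSector_pow_eq (p := p) hv
  have hj : v j ≠ 0 := fun h =>
    Complex.slitPlane_ne_zero hv (by rw [h, zero_div, zero_pow (NeZero.ne p)])
  obtain ⟨s, hs⟩ := exists_vadd_apply_eq hℓ hj (z := w * c)
    (by rw [mul_pow, hwv, div_pow, div_mul_cancel₀ _ (pow_ne_zero _ c.coe_ne_zero)])
  refine ⟨s +ᵥ v, ?_, proj_eq_proj_iff.2 (AddAction.mem_orbit v s)⟩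
  change (s +ᵥ v) j / c ∈ rootSector p
  rwa [hs, mul_div_cancel_right₀ _ c.coe_ne_zero]

/-- The `p`-th power of a nonzero coordinate, or its negative, avoids the negative real axis; so the
sectors about `1` and about a `p`-th root of `-1` suffice for each coordinate. -/
theorem exists_contractibleIn_cover (hℓ : ∀ j, IsCoprime (ℓ j) p) :
    ∃ U : Fin k × Fin 2 → Set (LensSpace p k ℓ),
      (∀ i, IsOpen (U i)) ∧ (⋃ i, U i) = Set.univ ∧ ∀ i, ContractibleIn (U i) := by
  obtain ⟨ω, hω⟩ := exists_circle_pow_eq_neg_one p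
  have hproj := (isAddQuotientCoveringMap_proj hℓ).isOpenQuotientMap
  refine ⟨fun i => proj p ℓ '' chart p ℓ i.1 (ω ^ (i.2 : ℕ)), fun i =>
    hproj.isOpenMap _ isOpen_chart, Set.eq_univ_of_forall fun x => ?_, fun i =>
    contractibleIn_chart.image_of_injOn hproj.continuous hproj.isOpenMap isOpen_chart
      (injOn_proj_chart (hℓ _))⟩
  obtain ⟨v, rfl⟩ := hproj.surjective x
  obtain ⟨j, hj⟩ := v.exists_apply_ne_zero
  rw [Set.mem_iUnion]
  rcases Complex.mem_slitPlane_or_neg_mem_slitPlane (pow_ne_zero p hj) with h | h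
  · exact ⟨(j, 0), proj_mem_image_chart (hℓ j) (by simpa using h)⟩
  · refine ⟨(j, 1), proj_mem_image_chart (hℓ j) ?_⟩
    have hω' : (ω : ℂ) ^ p = -1 := by rw [← Circle.coe_pow, hω, Circle.coe_neg, Circle.coe_one]
    simpa [div_pow, hω', div_neg] using h

end Charts

end LensCover

section Category

variable {X ι : Type*} [TopologicalSpace X] [Fintype ι]

lemma lsCat_eq_of_cover {n : ℕ} (hι : Fintype.card ι = n + 1) {U : ι → Set X}
    (hU_open : ∀ i, IsOpen (U i)) (hU_cover : ⋃ i, U i = Set.univ)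
    (hU : ∀ i, ContractibleIn (U i))
    (hmin : ∀ (m : ℕ) (V : Fin (m + 1) → Set X), (∀ i, IsOpen (V i)) → ⋃ i, V i = Set.univ →
      (∀ i, ContractibleIn (V i)) → n ≤ m) : lsCat X = n := by
  let e : Fin (n + 1) ≃ ι := (Fintype.equivFinOfCardEq hι).symm
  refine IsLeast.csInf_eq ⟨⟨U ∘ e, fun i => hU_open _, ?_, fun i => hU _⟩, ?_⟩
  · exact (e.surjective.iUnion_comp U).trans hU_cover
  · rintro m ⟨V, hV_open, hV_cover, hV⟩
    exact hmin m V hV_open hV_cover hV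

end Category

/-- For every odd `n = 2k-1`, `p ≥ 2` and parameters `ℓ` coprime to `p`,
`cat (L^n_p(ℓ)) = n`. -/
theorem lsCat_lensSpace (k : ℕ) (hk : 1 ≤ k) (n : ℕ) (hn : n = 2 * k - 1)
    (p : ℕ) (hp2 : 2 ≤ p)
    (ℓ : Fin k → ℤ) (hℓ : ∀ j, IsCoprime (ℓ j) (p : ℤ)) :
    lsCat (LensSpace p k ℓ) = n := by
  have : NeZero p := ⟨by omega⟩
  obtain ⟨U, hU_open, hU_cover, hU⟩ := LensCover.exists_contractibleIn_cover hℓ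
  have hcard : Fintype.card (Fin k × Fin 2) = n + 1 := by
    rw [Fintype.card_prod, Fintype.card_fin, Fintype.card_fin]
    omega
  refine lsCat_eq_of_cover hcard hU_open hU_cover hU fun m V hV_open hV_cover hV => ?_
  rw [hn]
  exact LensCover.le_of_contractibleIn_cover (by omega) (by omega) hℓ hV_open hV_cover hV
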